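/- arXiv:2008.13587 — 2 statements merged into one kernel-verified Lean document; each statement's English description precedes it below -/
import Mathlib

section
/- Let R and R' be reduced commutative ℝ-algebras, L a Lie algebra over R and L' a Lie algebra over R'. Equip TrivSqZeroExt R L and TrivSqZeroExt R' L' with their commutative ring structures and with the Lie brackets ⁅(u,A),(v,B)⁆ := (0, ⁅A,B⁆). If Ψ : TrivSqZeroExt R L → TrivSqZeroExt R' L' is an ℝ-linear bijection that is simultaneously a ring homomorphism and a Lie ring homomorphism, then Ψ maps the image of inr : L → TrivSqZeroExt R L onto the image of inr : L' → TrivSqZeroExt R' L', and the map L → L' given by A ↦ snd (Ψ (inr A)) is an isomorphism of real Lie algebras. (This is the algebraic mechanism of the paper's main theorem: a Poisson-algebra isomorphism of the symbol algebras restricts to a Lie algebra isomorphism Ψ(sl(E)) = sl(F).) -/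
open TrivSqZeroExt

/-!
The ideal `inr L` is recognised by the ring structure alone: over a reduced base ring, an element
of the trivial square-zero extension lies in the range of `inr` iff it squares to zero
(`mem_range_inr_iff_mul_self`). A bijective multiplicative additive map preserves the property of
squaring to zero in both directions, so `Ψ` carries `inr L` onto `inr L'`. Hence
`Ψ (inr A) = inr (snd (Ψ (inr A)))`, and bijectivity, linearity and bracket preservation of
`A ↦ snd (Ψ (inr A))` are inherited from `Ψ`.
-/

theorem mem_range_inr_iff_mul_self {R M : Type*} [CommRing R] [IsReduced R] [AddCommGroup M]
    [Module R M] [Module Rᵐᵒᵖ M] (z : TrivSqZeroExt R M) :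
    z ∈ Set.range (inr : M → TrivSqZeroExt R M) ↔ z * z = 0 := by
  constructor
  · rintro ⟨A, rfl⟩
    exact inr_mul_inr R A A
  · intro h
    have h1 : fst z * fst z = 0 := by rw [← fst_mul, h, fst_zero]
    have h2 : fst z = 0 := IsReduced.eq_zero _ ⟨2, by rw [pow_two, h1]⟩
    exact ⟨snd z, TrivSqZeroExt.ext (by simp [h2]) (by simp)⟩

/-- Let `R, R'` be reduced commutative `ℝ`-algebras, `L` a Lie algebra over `R`
and `L'` a Lie algebra over `R'`.  Equip `TrivSqZeroExt R L` and `TrivSqZeroExt R' L'` with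
their commutative ring structures and with the brackets `⁅(u,A),(v,B)⁆ = (0,⁅A,B⁆)`.
If `Ψ` is an `ℝ`-linear bijection which is simultaneously a ring homomorphism and a
Lie ring homomorphism (for these brackets), then `Ψ` maps the image of
`inr : L → TrivSqZeroExt R L` onto the image of `inr : L' → TrivSqZeroExt R' L'`, and
`A ↦ snd (Ψ (inr A))` is an isomorphism of real Lie algebras `L → L'`. -/
theorem stmt_0 (R R' L L' : Type*)
    [CommRing R] [Algebra ℝ R] [IsReduced R]
    [CommRing R'] [Algebra ℝ R'] [IsReduced R']
    [LieRing L] [LieAlgebra R L] [Module Rᵐᵒᵖ L] [IsCentralScalar R L]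
    [Module ℝ L] [IsScalarTower ℝ R L] [IsScalarTower ℝ Rᵐᵒᵖ L]
    [LieRing L'] [LieAlgebra R' L'] [Module R'ᵐᵒᵖ L'] [IsCentralScalar R' L']
    [Module ℝ L'] [IsScalarTower ℝ R' L'] [IsScalarTower ℝ R'ᵐᵒᵖ L']
    (Ψ : TrivSqZeroExt R L → TrivSqZeroExt R' L')
    (hbij : Function.Bijective Ψ)
    (hlin : ∀ (c : ℝ) (x : TrivSqZeroExt R L), Ψ (c • x) = c • Ψ x)
    (hadd : ∀ x y : TrivSqZeroExt R L, Ψ (x + y) = Ψ x + Ψ y)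
    (hmul : ∀ x y : TrivSqZeroExt R L, Ψ (x * y) = Ψ x * Ψ y)
    (hone : Ψ 1 = 1)
    -- `Ψ` is a Lie ring homomorphism for the brackets `⁅(u,A),(v,B)⁆ := (0, ⁅A,B⁆)`:
    (hlie : ∀ x y : TrivSqZeroExt R L,
      Ψ (inr ⁅snd x, snd y⁆) = inr ⁅snd (Ψ x), snd (Ψ y)⁆) :
    Ψ '' Set.range (inr : L → TrivSqZeroExt R L)
        = Set.range (inr : L' → TrivSqZeroExt R' L') ∧
    Function.Bijective (fun A : L => snd (Ψ (inr A))) ∧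
    (∀ A B : L, snd (Ψ (inr (A + B))) = snd (Ψ (inr A)) + snd (Ψ (inr B))) ∧
    (∀ (c : ℝ) (A : L), snd (Ψ (inr (c • A))) = c • snd (Ψ (inr A))) ∧
    (∀ A B : L, snd (Ψ (inr ⁅A, B⁆)) = ⁅snd (Ψ (inr A)), snd (Ψ (inr B))⁆) := by
  have hzero : Ψ 0 = 0 := by simpa using hadd 0 0
  have hsq (z : TrivSqZeroExt R L) :
      Ψ z ∈ Set.range (inr : L' → TrivSqZeroExt R' L') ↔
        z ∈ Set.range (inr : L → TrivSqZeroExt R L) := by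
    rw [mem_range_inr_iff_mul_self, mem_range_inr_iff_mul_self, ← hmul, ← hzero]
    exact hbij.1.eq_iff
  have hinr (A : L) : inr (snd (Ψ (inr A))) = Ψ (inr A) := by
    obtain ⟨B, hB⟩ := (hsq (inr A)).mpr ⟨A, rfl⟩
    rw [← hB, snd_inr]
  refine ⟨?_, ⟨?_, ?_⟩, ?_, ?_, ?_⟩
  · ext w
    obtain ⟨z, rfl⟩ := hbij.2 w
    rw [hbij.1.mem_set_image, hsq]
  · intro A B h
    apply inr_injective (R := R)
    apply hbij.1
    rw [← hinr A, ← hinr B]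
    exact congrArg inr h
  · intro B
    obtain ⟨z, hz⟩ := hbij.2 (inr B)
    obtain ⟨A, rfl⟩ := (hsq z).mp ⟨B, hz.symm⟩
    exact ⟨A, by simp [hz]⟩
  · intro A B
    rw [inr_add, hadd, snd_add]
  · intro c A
    rw [inr_smul, hlin, snd_smul]
  · intro A B
    simpa using congrArg snd (hlie (inr A) (inr B))
end

section
/- Let R and R' be reduced commutative ℝ-algebras, V an R-module and V' an R'-module. If Ψ : TrivSqZeroExt R V → TrivSqZeroExt R' V' is an isomorphism of ℝ-algebras, then the map R → R' given by u ↦ fst (Ψ (inl u)) is an isomorphism of ℝ-algebras. (This is the algebraic content of the paper's Proposition that any ℝ-algebra isomorphism 𝔖(𝒫(E,M)) → 𝔖(𝒫(F,N)) identifies the degree-zero parts 𝔖⁰(𝒫(E,M)) ≅ C^∞(M) and 𝔖⁰(𝒫(F,N)) ≅ C^∞(N).) -/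
/-!
For `R` reduced, the kernel of `fst : TrivSqZeroExt R V → R` is the nilradical, which every ring
homomorphism preserves. Hence `fst ∘ Φ` factors through `fst` for every homomorphism `Φ` into an
extension of a reduced ring (`fst_map_inl_fst`); applied to `Ψ` and `Ψ⁻¹`, this shows that the
maps `u ↦ fst (Ψ (inl u))` and `v ↦ fst (Ψ⁻¹ (inl v))` are mutually inverse.
-/

open TrivSqZeroExt

/-- The degree-zero part of `Φ x` depends only on that of `x`: the difference `x - inl x.fst` is
`inr x.snd`, which squares to zero, so its image in the reduced ring `R'` vanishes. -/
theorem fst_map_inl_fst {R R' V V' : Type*}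
    [CommRing R] [CommRing R'] [IsReduced R']
    [AddCommGroup V] [Module R V] [Module Rᵐᵒᵖ V] [IsCentralScalar R V]
    [AddCommGroup V'] [Module R' V'] [Module R'ᵐᵒᵖ V'] [IsCentralScalar R' V']
    (Φ : TrivSqZeroExt R V →+* TrivSqZeroExt R' V') (x : TrivSqZeroExt R V) :
    fst (Φ (inl (fst x))) = fst (Φ x) := by
  have h : fst (Φ (inr (snd x))) = 0 := by
    rw [← pow_eq_zero_iff two_ne_zero, sq, ← fst_mul, ← map_mul, inr_mul_inr, map_zero, fst_zero]
  conv_rhs => rw [← inl_fst_add_inr_snd_eq x, map_add, fst_add, h, add_zero]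

/-- If `Ψ` is an `ℝ`-algebra isomorphism between the trivial square-zero
extensions of reduced commutative `ℝ`-algebras `R` and `R'`, then `u ↦ fst (Ψ (inl u))`
is an isomorphism of `ℝ`-algebras `R → R'`. -/
theorem stmt_1 (R R' V V' : Type*)
    [CommRing R] [Algebra ℝ R] [IsReduced R]
    [CommRing R'] [Algebra ℝ R'] [IsReduced R']
    [AddCommGroup V] [Module R V] [Module Rᵐᵒᵖ V] [IsCentralScalar R V]
    [Module ℝ V] [IsScalarTower ℝ R V] [IsScalarTower ℝ Rᵐᵒᵖ V]
    [AddCommGroup V'] [Module R' V'] [Module R'ᵐᵒᵖ V'] [IsCentralScalar R' V']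
    [Module ℝ V'] [IsScalarTower ℝ R' V'] [IsScalarTower ℝ R'ᵐᵒᵖ V']
    (Ψ : TrivSqZeroExt R V ≃ₐ[ℝ] TrivSqZeroExt R' V') :
    Function.Bijective (fun u : R => fst (Ψ (inl u))) ∧
    (∀ u v : R, fst (Ψ (inl (u * v))) = fst (Ψ (inl u)) * fst (Ψ (inl v))) ∧
    (∀ u v : R, fst (Ψ (inl (u + v))) = fst (Ψ (inl u)) + fst (Ψ (inl v))) ∧
    fst (Ψ (inl (1 : R))) = 1 ∧
    (∀ (c : ℝ) (u : R), fst (Ψ (inl (c • u))) = c • fst (Ψ (inl u))) := by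
  refine ⟨Function.bijective_iff_has_inverse.2
    ⟨fun v => fst (Ψ.symm (inl v)), fun u => ?_, fun v => ?_⟩, ?_, ?_, ?_, ?_⟩
  · simpa using fst_map_inl_fst (Ψ.symm : TrivSqZeroExt R' V' →+* TrivSqZeroExt R V) (Ψ (inl u))
  · simpa using fst_map_inl_fst (Ψ : TrivSqZeroExt R V →+* TrivSqZeroExt R' V') (Ψ.symm (inl v))
  · intro u v
    rw [inl_mul, map_mul, fst_mul]
  · intro u v
    rw [inl_add, map_add, fst_add]
  · rw [inl_one, map_one, fst_one]
  · intro c u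
    rw [inl_smul, map_smul, fst_smul]
end
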